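/- arXiv:2605.20122 — 2 statements merged into one kernel-verified Lean document; each statement's English description precedes it below -/
import Mathlib

section
/- Let d ≥ 1 be an integer, 0 < α < 1, and let B, M, C > 0. Let ℓ : (0,1)^d → ℝ^d be measurable with ‖ℓ(x)‖ ≤ B for all x and with α-Hölder seminorm at most M, and let μ : (0,1)^d → ℝ be measurable with 0 ≤ μ(x) ≤ C for all x and with α-Hölder seminorm at most C. Then there exists a constant K > 0, depending only on d, B, M, C and α, such that for every h ∈ (0,1] with 1/h a positive integer, |∫_{(0,1)^d} ⟨ℓ(x), x − G_h(x)⟩ μ(x) dx| ≤ K·h^{1+α}, where the integral is with respect to Lebesgue measure. -/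
open MeasureTheory
open scoped ENNReal RealInnerProductSpace

noncomputable section

abbrev Euc (d : ℕ) := EuclideanSpace ℝ (Fin d)

/-- The open unit cube `(0,1)^d`. -/
def unitCube (d : ℕ) : Set (Euc d) := {x | ∀ i, x i ∈ Set.Ioo (0 : ℝ) 1}

/-- `G_h` : map each point to the center of the axis-aligned grid cell
(of side length `h`) containing it. -/
def gridSnap (d : ℕ) (h : ℝ) (x : Euc d) : Euc d :=
  (EuclideanSpace.equiv (Fin d) ℝ).symm fun i => h * ⌊x i / h⌋ + h / 2

/-- Couplings of two Borel (probability) measures: probability measures on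
the product with the prescribed marginals. -/
def Couplings {d : ℕ} (P Q : Measure (Euc d)) : Set (Measure (Euc d × Euc d)) :=
  {γ | IsProbabilityMeasure γ ∧ γ.map Prod.fst = P ∧ γ.map Prod.snd = Q}

/-- Squared 2-Wasserstein distance. -/
def W2sq {d : ℕ} (P Q : Measure (Euc d)) : ℝ :=
  sInf {r | ∃ γ ∈ Couplings P Q, r = ∫ p, ‖p.1 - p.2‖ ^ 2 ∂γ}

/-- 2-Wasserstein distance. -/
def W2 {d : ℕ} (P Q : Measure (Euc d)) : ℝ := Real.sqrt (W2sq P Q)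

/-- `P` and `Q` are `(α, C)`-controlled probability measures on `(0,1)^d`:
they possess densities `μ, ν` w.r.t. Lebesgue measure on `(0,1)^d` whose
`α`-Hölder seminorms sum to at most `C`, and which are bounded between
`C⁻¹` and `C`. -/
def IsControlled (d : ℕ) (α C : ℝ) (P Q : Measure (Euc d)) : Prop :=
  ∃ μ ν : Euc d → ℝ,
    P = (volume.restrict (unitCube d)).withDensity (fun x => ENNReal.ofReal (μ x)) ∧
    Q = (volume.restrict (unitCube d)).withDensity (fun x => ENNReal.ofReal (ν x)) ∧
    (∃ Cμ Cν : ℝ, 0 ≤ Cμ ∧ 0 ≤ Cν ∧ Cμ + Cν ≤ C ∧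
      (∀ x ∈ unitCube d, ∀ y ∈ unitCube d, |μ x - μ y| ≤ Cμ * ‖x - y‖ ^ α) ∧
      (∀ x ∈ unitCube d, ∀ y ∈ unitCube d, |ν x - ν y| ≤ Cν * ‖x - y‖ ^ α)) ∧
    (∀ x ∈ unitCube d, C⁻¹ ≤ μ x ∧ μ x ≤ C) ∧
    (∀ x ∈ unitCube d, C⁻¹ ≤ ν x ∧ ν x ≤ C)

/-!
Let `R` reflect each grid cell about its center. As `1 / h` is an integer, the cells tile the cube,
so `R` preserves Lebesgue measure on it, while `v x = x - G_h x` satisfies `v (R x) = -v x` for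
almost every `x`. Hence, with `f = μ • ℓ`,
`2 ∫ ⟪f x, v x⟫ = ∫ ⟪f x - f (R x), v x⟫`,
where the Hölder bound on `f` contributes a factor of order `h ^ α` and `‖v x‖` one of order `h`.
-/

open Set Bornology
open scoped NNReal

section Holder

theorem holderOnWith_iff_norm_sub_le {E F : Type*} [SeminormedAddCommGroup E]
    [SeminormedAddCommGroup F] {C r : ℝ≥0} {f : E → F} {s : Set E} :
    HolderOnWith C r f s ↔ ∀ x ∈ s, ∀ y ∈ s, ‖f x - f y‖ ≤ C * ‖x - y‖ ^ (r : ℝ) := by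
  simp only [← dist_eq_norm]
  refine ⟨fun hf x hx y hy ↦ hf.dist_le hx hy, fun hf x hx y hy ↦ ?_⟩
  rw [edist_nndist, edist_nndist, ← ENNReal.coe_rpow_of_nonneg _ r.coe_nonneg]
  exact_mod_cast hf x hx y hy

theorem norm_smul_sub_smul_le {𝕜 E : Type*} [SeminormedRing 𝕜] [SeminormedAddCommGroup E]
    [Module 𝕜 E] [IsBoundedSMul 𝕜 E] (a b : 𝕜) (u v : E) :
    ‖a • u - b • v‖ ≤ ‖a‖ * ‖u - v‖ + ‖a - b‖ * ‖v‖ :=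
  calc ‖a • u - b • v‖ = ‖a • (u - v) + (a - b) • v‖ := by
        rw [smul_sub, sub_smul, sub_add_sub_cancel]
    _ ≤ ‖a • (u - v)‖ + ‖(a - b) • v‖ := norm_add_le _ _
    _ ≤ ‖a‖ * ‖u - v‖ + ‖a - b‖ * ‖v‖ := add_le_add (norm_smul_le _ _) (norm_smul_le _ _)

theorem holderOnWith_smul {X 𝕜 E : Type*} [PseudoMetricSpace X] [SeminormedRing 𝕜]
    [SeminormedAddCommGroup E] [Module 𝕜 E] [IsBoundedSMul 𝕜 E] {s : Set X} {f : X → 𝕜}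
    {g : X → E} {r A B C D : ℝ≥0} (hf : HolderOnWith A r f s) (hg : HolderOnWith B r g s)
    (hfC : ∀ x ∈ s, ‖f x‖ ≤ C) (hgD : ∀ x ∈ s, ‖g x‖ ≤ D) :
    HolderOnWith (C * B + A * D) r (fun x ↦ f x • g x) s := by
  intro x hx y hy
  rw [edist_nndist, edist_nndist, ← ENNReal.coe_rpow_of_nonneg _ r.coe_nonneg]
  norm_cast
  have hf' := hf.nndist_le hx hy
  have hg' := hg.nndist_le hx hy
  rw [nndist_eq_nnnorm] at hf' hg' ⊢
  calc ‖f x • g x - f y • g y‖₊ ≤ ‖f x‖₊ * ‖g x - g y‖₊ + ‖f x - f y‖₊ * ‖g y‖₊ :=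
        norm_smul_sub_smul_le _ _ _ _
    _ ≤ C * (B * nndist x y ^ (r : ℝ)) + A * nndist x y ^ (r : ℝ) * D := by
        gcongr
        exacts [hfC x hx, hgD y hy]
    _ = (C * B + A * D) * nndist x y ^ (r : ℝ) := by ring

theorem integrableOn_of_holderOnWith {X E : Type*} [PseudoMetricSpace X] [ProperSpace X]
    [MeasurableSpace X] [OpensMeasurableSpace X] [NormedAddCommGroup E] {ν : Measure X}
    [IsFiniteMeasureOnCompacts ν] {C r : ℝ≥0} {f : X → E} {s : Set X}
    (hf : HolderOnWith C r f s) (hr : 0 < r) (hs : IsBounded s) (hsm : MeasurableSet s) :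
    IntegrableOn f s ν := by
  have himage : IsBounded (f '' s) :=
    Metric.isBounded_iff_ediam_ne_top.2 <| ne_top_of_le_ne_top
      (ENNReal.mul_ne_top ENNReal.coe_ne_top
        (ENNReal.rpow_ne_top_of_nonneg r.coe_nonneg hs.ediam_ne_top)) hf.ediam_image_le
  obtain ⟨D, hD⟩ := himage.exists_norm_le
  exact .of_bound hs.measure_lt_top ((hf.continuousOn hr).aestronglyMeasurable hsm) D
    (ae_restrict_of_forall_mem hsm fun x hx ↦ hD _ (mem_image_of_mem f hx))

end Holder

theorem abs_integral_inner_le_of_comp_eq_neg {X E : Type*} [MeasurableSpace X]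
    [NormedAddCommGroup E] [InnerProductSpace ℝ E] {ν : Measure X} [IsFiniteMeasure ν]
    {R : X → X} {f v : X → E} {δ ρ : ℝ} (hR : MeasurePreserving R ν ν)
    (hfv : Integrable (fun x ↦ ⟪f x, v x⟫) ν) (hodd : ∀ᵐ x ∂ν, v (R x) = -v x)
    (hf : ∀ᵐ x ∂ν, ‖f x - f (R x)‖ ≤ δ) (hv : ∀ᵐ x ∂ν, ‖v x‖ ≤ ρ) :
    |∫ x, ⟪f x, v x⟫ ∂ν| ≤ δ * ρ / 2 * ν.real univ := by
  have hreflect : ∫ x, ⟪f (R x), v (R x)⟫ ∂ν = ∫ x, ⟪f x, v x⟫ ∂ν := by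
    conv_rhs => rw [← hR.map_eq]
    exact (integral_map hR.aemeasurable (hR.map_eq.symm ▸ hfv.aestronglyMeasurable)).symm
  have hreflect_int : Integrable (fun x ↦ ⟪f (R x), v (R x)⟫) ν :=
    hR.integrable_comp_of_integrable hfv
  have hsymm : 2 * ∫ x, ⟪f x, v x⟫ ∂ν = ∫ x, ⟪f x - f (R x), v x⟫ ∂ν := by
    calc 2 * ∫ x, ⟪f x, v x⟫ ∂ν = ∫ x, ⟪f x, v x⟫ + ⟪f (R x), v (R x)⟫ ∂ν := by
          rw [integral_add hfv hreflect_int, hreflect, two_mul]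
      _ = ∫ x, ⟪f x - f (R x), v x⟫ ∂ν := by
          refine integral_congr_ae ?_
          filter_upwards [hodd] with x hx
          rw [hx, inner_neg_right, inner_sub_left, sub_eq_add_neg]
  have hbound : |∫ x, ⟪f x - f (R x), v x⟫ ∂ν| ≤ δ * ρ * ν.real univ := by
    rw [← Real.norm_eq_abs]
    refine norm_integral_le_of_norm_le_const ?_
    filter_upwards [hf, hv] with x hfx hvx
    exact (norm_inner_le_norm _ _).trans
      (mul_le_mul hfx hvx (norm_nonneg _) ((norm_nonneg _).trans hfx))
  rw [← hsymm, abs_mul, abs_two] at hbound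
  linarith

section CellReflect

/-- Reflection of the real line about the midpoint of each grid cell `[h * k, h * (k + 1))`. -/
def cellReflect (h t : ℝ) : ℝ := h * (2 * ⌊t / h⌋ + 1) - t

variable {h : ℝ}

theorem measurable_cellReflect (h : ℝ) : Measurable (cellReflect h) := by
  unfold cellReflect
  fun_prop

theorem floor_div_eq_iff_mem_Ico (hh : 0 < h) {t : ℝ} {k : ℤ} :
    ⌊t / h⌋ = k ↔ t ∈ Ico (h * k) (h * (k + 1)) := by
  rw [Int.floor_eq_iff, le_div_iff₀' hh, div_lt_iff₀' hh, mem_Ico]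

theorem mem_Ico_mul_floor_div (hh : 0 < h) (t : ℝ) :
    t ∈ Ico (h * ⌊t / h⌋) (h * (⌊t / h⌋ + 1)) :=
  (floor_div_eq_iff_mem_Ico hh).1 rfl

theorem mul_intCast_lt_cellReflect_iff (hh : 0 < h) {t : ℝ} {m : ℤ} :
    h * m < cellReflect h t ↔ h * m ≤ t := by
  obtain ⟨hle, hlt⟩ := mem_Ico_mul_floor_div hh t
  rw [← le_div_iff₀' hh, ← Int.le_floor]
  unfold cellReflect
  constructor
  · intro hm
    have : (m : ℝ) < ⌊t / h⌋ + 1 := lt_of_mul_lt_mul_left (by linarith) hh.le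
    exact Int.lt_add_one_iff.1 (by exact_mod_cast this)
  · intro hm
    have : h * m ≤ h * ⌊t / h⌋ := by gcongr
    linarith

theorem cellReflect_preimage_Ioc (hh : 0 < h) (m n : ℤ) :
    cellReflect h ⁻¹' Ioc (h * m) (h * n) = Ico (h * m) (h * n) := by
  ext t
  rw [mem_preimage, mem_Ioc, mem_Ico, mul_intCast_lt_cellReflect_iff hh,
    ← not_lt (a := h * n), mul_intCast_lt_cellReflect_iff hh, not_le]

theorem measurePreserving_cellReflect (hh : 0 < h) : MeasurePreserving (cellReflect h) := by
  refine ⟨measurable_cellReflect h, ?_⟩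
  have hcover : ⋃ k : ℤ, Ioc (h * k) (h * ↑(k + 1)) = univ := by
    simpa [mul_comm h] using iUnion_Ioc_zsmul hh
  refine Measure.ext_of_iUnion_eq_univ hcover fun k ↦ ?_
  have hEq : ∀ t ∈ Ico (h * k) (h * ↑(k + 1)), cellReflect h t = h * (2 * k + 1) - t := by
    intro t ht
    rw [Int.cast_add, Int.cast_one, ← floor_div_eq_iff_mem_Ico hh] at ht
    rw [cellReflect, ht]
  have hpreimage : (fun t ↦ h * (2 * k + 1) - t) ⁻¹' Ioc (h * k) (h * ↑(k + 1))
      = Ico (h * k) (h * ↑(k + 1)) := by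
    rw [preimage_const_sub_Ioc]
    push_cast
    congr 1 <;> ring
  have hsub := (Measure.measurePreserving_sub_left volume (h * (2 * k + 1))).restrict_preimage
    (measurableSet_Ioc (a := h * k) (b := h * ↑(k + 1)))
  rw [hpreimage] at hsub
  rw [Measure.restrict_map (measurable_cellReflect h) measurableSet_Ioc,
    cellReflect_preimage_Ioc hh,
    Measure.map_congr (ae_restrict_of_forall_mem measurableSet_Ico hEq), hsub.map_eq]

theorem measurePreserving_cellReflect_Ioo (hh : 0 < h) (m n : ℤ) :
    MeasurePreserving (cellReflect h) (volume.restrict (Ioo (h * m) (h * n)))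
      (volume.restrict (Ioo (h * m) (h * n))) := by
  have := (measurePreserving_cellReflect hh).restrict_preimage
    (measurableSet_Ioc (a := h * m) (b := h * n))
  rwa [cellReflect_preimage_Ioc hh, ← Measure.restrict_congr_set Ioo_ae_eq_Ico,
    ← Measure.restrict_congr_set Ioo_ae_eq_Ioc] at this

-- This fails at the grid points `h * k`, which are the left endpoints of the half-open cells.
theorem floor_cellReflect_div_ae_eq (hh : 0 < h) : ∀ᵐ t, ⌊cellReflect h t / h⌋ = ⌊t / h⌋ := by
  filter_upwards [ae_all_iff.2 fun k : ℤ ↦ Measure.ae_ne volume (h * k)] with t hgrid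
  obtain ⟨hle, hlt⟩ := mem_Ico_mul_floor_div hh t
  have hne := hle.lt_of_ne' (hgrid ⌊t / h⌋)
  rw [floor_div_eq_iff_mem_Ico hh, cellReflect]
  constructor <;> linarith

theorem abs_sub_cell_center_le (hh : 0 < h) (t : ℝ) : |t - (h * ⌊t / h⌋ + h / 2)| ≤ h / 2 := by
  obtain ⟨hle, hlt⟩ := mem_Ico_mul_floor_div hh t
  rw [abs_le]
  constructor <;> linarith

end CellReflect

section EuclideanSpace

variable {ι : Type*} [Fintype ι]

theorem euclideanSpace_norm_le_sqrt_card_mul {x : EuclideanSpace ℝ ι} {r : ℝ} (hr : 0 ≤ r)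
    (hx : ∀ i, |x i| ≤ r) : ‖x‖ ≤ √(Fintype.card ι) * r := by
  rw [EuclideanSpace.norm_eq, ← Real.sqrt_sq hr, ← Real.sqrt_mul (Nat.cast_nonneg _)]
  gcongr
  calc ∑ i, ‖x i‖ ^ 2 ≤ ∑ _i : ι, r ^ 2 := by
        gcongr with i
        exact hx i
    _ = Fintype.card ι * r ^ 2 := by simp

theorem ae_forall_euclideanSpace_apply {p : ℝ → Prop} (hp : ∀ᵐ t, p t) :
    ∀ᵐ x : EuclideanSpace ℝ ι, ∀ i, p (x i) :=
  ae_all_iff.2 fun i ↦ ((Measure.quasiMeasurePreserving_eval (fun _ ↦ volume) i).comp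
    (PiLp.volume_preserving_ofLp ι).quasiMeasurePreserving).ae hp

end EuclideanSpace

section UnitCube

theorem unitCube_eq_preimage_pi (d : ℕ) :
    unitCube d = WithLp.ofLp ⁻¹' univ.pi fun _ ↦ Ioo (0 : ℝ) 1 := by
  ext x
  simp [unitCube]

theorem measurableSet_unitCube (d : ℕ) : MeasurableSet (unitCube d) := by
  rw [unitCube_eq_preimage_pi]
  exact (MeasurableSet.univ_pi fun _ ↦ measurableSet_Ioo).preimage (by fun_prop)

theorem isBounded_unitCube (d : ℕ) : IsBounded (unitCube d) :=
  isBounded_iff_forall_norm_le.2 ⟨_, fun _ hx ↦ euclideanSpace_norm_le_sqrt_card_mul zero_le_one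
    fun i ↦ abs_le.2 ⟨by linarith [(hx i).1], (hx i).2.le⟩⟩

theorem measurePreserving_ofLp_unitCube (d : ℕ) :
    MeasurePreserving (MeasurableEquiv.toLp 2 (Fin d → ℝ)).symm (volume.restrict (unitCube d))
      (Measure.pi fun _ ↦ volume.restrict (Ioo 0 1)) := by
  rw [unitCube_eq_preimage_pi, ← Measure.restrict_pi_pi]
  exact (PiLp.volume_preserving_ofLp (Fin d)).restrict_preimage
    (MeasurableSet.univ_pi fun _ ↦ measurableSet_Ioo)

instance isProbabilityMeasure_restrict_unitCube (d : ℕ) :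
    IsProbabilityMeasure (volume.restrict (unitCube d)) := by
  have : IsProbabilityMeasure (volume.restrict (Ioo (0 : ℝ) 1)) := ⟨by simp⟩
  have hcoord := measurePreserving_ofLp_unitCube d
  have : IsProbabilityMeasure ((volume.restrict (unitCube d)).map
      (MeasurableEquiv.toLp 2 (Fin d → ℝ)).symm) := hcoord.map_eq ▸ inferInstance
  exact Measure.isProbabilityMeasure_of_map (MeasurableEquiv.toLp 2 (Fin d → ℝ)).symm

end UnitCube

section GridReflect

/-- Reflection of `ℝ^d` about the centers of the grid cells of side length `h`. -/
def gridReflect (d : ℕ) (h : ℝ) (x : Euc d) : Euc d :=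
  WithLp.toLp 2 fun i ↦ cellReflect h (x i)

variable {d : ℕ} {h : ℝ}

theorem gridSnap_apply (x : Euc d) (i : Fin d) :
    gridSnap d h x i = h * ⌊x i / h⌋ + h / 2 := rfl

theorem gridReflect_eq_two_smul_sub (x : Euc d) :
    gridReflect d h x = (2 : ℝ) • gridSnap d h x - x := by
  ext i
  simp only [gridReflect, cellReflect, PiLp.sub_apply, PiLp.smul_apply, smul_eq_mul,
    gridSnap_apply]
  ring

theorem measurable_gridSnap (d : ℕ) (h : ℝ) : Measurable (gridSnap d h) :=
  (EuclideanSpace.equiv (Fin d) ℝ).symm.continuous.measurable.comp (by fun_prop)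

theorem norm_sub_gridSnap_le (hh : 0 < h) (x : Euc d) :
    ‖x - gridSnap d h x‖ ≤ √d * h / 2 := by
  have := euclideanSpace_norm_le_sqrt_card_mul (x := x - gridSnap d h x) (half_pos hh).le
    fun i ↦ abs_sub_cell_center_le hh (x i)
  rwa [Fintype.card_fin, ← mul_div_assoc] at this

theorem norm_sub_gridReflect_le (hh : 0 < h) (x : Euc d) :
    ‖x - gridReflect d h x‖ ≤ √d * h := by
  have hsub : x - gridReflect d h x = (2 : ℝ) • (x - gridSnap d h x) := by
    rw [gridReflect_eq_two_smul_sub]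
    module
  rw [hsub, norm_smul, Real.norm_ofNat]
  linarith [norm_sub_gridSnap_le hh x]

theorem gridReflect_sub_gridSnap_gridReflect_ae_eq (hh : 0 < h) :
    ∀ᵐ x : Euc d, gridReflect d h x - gridSnap d h (gridReflect d h x)
      = -(x - gridSnap d h x) := by
  filter_upwards [ae_forall_euclideanSpace_apply (floor_cellReflect_div_ae_eq hh)] with x hx
  have hsnap : gridSnap d h (gridReflect d h x) = gridSnap d h x := by
    ext i
    simp only [gridSnap_apply, gridReflect, hx i]
  rw [hsnap, gridReflect_eq_two_smul_sub]
  module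

theorem measurePreserving_gridReflect_unitCube (hh : 0 < h) {L : ℕ} (hL : h * L = 1) :
    MeasurePreserving (gridReflect d h) (volume.restrict (unitCube d))
      (volume.restrict (unitCube d)) := by
  have hcell : MeasurePreserving (cellReflect h) (volume.restrict (Ioo 0 1))
      (volume.restrict (Ioo 0 1)) := by
    simpa [hL] using measurePreserving_cellReflect_Ioo hh 0 L
  have hcoord := measurePreserving_ofLp_unitCube d
  exact (hcoord.symm _).comp ((measurePreserving_pi _ _ fun _ ↦ hcell).comp hcoord)

end GridReflect

theorem abs_integral_inner_sub_gridSnap_le {d L : ℕ} {h : ℝ} (hh : 0 < h) (hL : h * L = 1)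
    {A r : ℝ≥0} (hr : 0 < r) {f : Euc d → Euc d} (hf : HolderOnWith A r f (unitCube d)) :
    |∫ x in unitCube d, ⟪f x, x - gridSnap d h x⟫| ≤ A / 4 * (√d * h) ^ (1 + r : ℝ) := by
  have hR := measurePreserving_gridReflect_unitCube (d := d) hh hL
  have hcube := ae_restrict_mem (μ := volume) (measurableSet_unitCube d)
  have hdisp := ae_of_all (volume.restrict (unitCube d)) (norm_sub_gridSnap_le hh)
  have hosc : ∀ᵐ x ∂volume.restrict (unitCube d),
      ‖f x - f (gridReflect d h x)‖ ≤ A * (√d * h) ^ (r : ℝ) := by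
    filter_upwards [hcube, hR.quasiMeasurePreserving.ae hcube] with x hx hRx
    rw [← dist_eq_norm]
    exact hf.dist_le_of_le hx hRx (by simpa only [dist_eq_norm] using norm_sub_gridReflect_le hh x)
  have hint : IntegrableOn (fun x ↦ ⟪f x, x - gridSnap d h x⟫) (unitCube d) :=
    (innerSL ℝ).integrable_of_bilin_of_bdd_right _
      (integrableOn_of_holderOnWith hf hr (isBounded_unitCube d) (measurableSet_unitCube d))
      (measurable_id.sub (measurable_gridSnap d h)).aestronglyMeasurable hdisp
  calc |∫ x in unitCube d, ⟪f x, x - gridSnap d h x⟫|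
      ≤ A * (√d * h) ^ (r : ℝ) * (√d * h / 2) / 2
          * (volume.restrict (unitCube d)).real univ :=
        abs_integral_inner_le_of_comp_eq_neg hR hint
          (ae_restrict_of_ae (gridReflect_sub_gridSnap_gridReflect_ae_eq hh)) hosc hdisp
    _ = A / 4 * (√d * h) ^ (1 + r : ℝ) := by
        rw [probReal_univ, Real.rpow_one_add' (by positivity) (by positivity)]
        ring

theorem midpoint_cancellation_general {d L : ℕ} {h : ℝ} (hh : 0 < h) (hL : h = 1 / L)
    {B C M N r : ℝ≥0} (hr : 0 < r) {ℓ : Euc d → Euc d} {μ : Euc d → ℝ}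
    (hℓB : ∀ x ∈ unitCube d, ‖ℓ x‖ ≤ B) (hℓ : HolderOnWith M r ℓ (unitCube d))
    (hμC : ∀ x ∈ unitCube d, |μ x| ≤ C) (hμ : HolderOnWith N r μ (unitCube d)) :
    |∫ x in unitCube d, ⟪ℓ x, x - gridSnap d h x⟫ * μ x|
      ≤ (C * M + N * B) / 4 * √d ^ (1 + r : ℝ) * h ^ (1 + r : ℝ) := by
  have hL' : h * L = 1 := by
    rw [hL, one_div_mul_cancel]
    intro hL0
    simp [hL, hL0] at hh
  have := abs_integral_inner_sub_gridSnap_le hh hL' hr (holderOnWith_smul hμ hℓ hμC hℓB)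
  simpa only [real_inner_smul_left, mul_comm (μ _), NNReal.coe_add, NNReal.coe_mul,
    Real.mul_rpow (Real.sqrt_nonneg d) hh.le, ← mul_assoc] using this

/-- For a bounded `α`-Hölder displacement field `ℓ` and a bounded
`α`-Hölder nonnegative weight `μ`, the midpoint-type cancellation bound
`|∫_{(0,1)^d} ⟨ℓ(x), x − G_h(x)⟩ μ(x) dx| ≤ K h^{1+α}` holds,
with `K` depending only on `d, B, M, C, α`. -/
theorem midpoint_cancellation (d : ℕ) (hd : 1 ≤ d) (α B M C : ℝ)
    (hα0 : 0 < α) (hα1 : α < 1) (hB : 0 < B) (hM : 0 < M) (hC : 0 < C) :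
    ∃ K > (0 : ℝ), ∀ ℓ : Euc d → Euc d, Measurable ℓ →
      (∀ x ∈ unitCube d, ‖ℓ x‖ ≤ B) →
      (∀ x ∈ unitCube d, ∀ y ∈ unitCube d, ‖ℓ x - ℓ y‖ ≤ M * ‖x - y‖ ^ α) →
      ∀ μ : Euc d → ℝ, Measurable μ →
      (∀ x ∈ unitCube d, 0 ≤ μ x ∧ μ x ≤ C) →
      (∀ x ∈ unitCube d, ∀ y ∈ unitCube d, |μ x - μ y| ≤ C * ‖x - y‖ ^ α) →
      ∀ h : ℝ, 0 < h → h ≤ 1 → (∃ L : ℕ, 0 < L ∧ h = 1 / L) →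
        |(∫ x in unitCube d, ⟪ℓ x, x - gridSnap d h x⟫ * μ x)|
          ≤ K * h ^ (1 + α) := by
  have : 0 < √(d : ℝ) := Real.sqrt_pos.2 (by exact_mod_cast hd)
  lift α to ℝ≥0 using hα0.le
  lift B to ℝ≥0 using hB.le
  lift M to ℝ≥0 using hM.le
  lift C to ℝ≥0 using hC.le
  refine ⟨(C * M + C * B) / 4 * √d ^ (1 + α : ℝ), by positivity, ?_⟩
  intro ℓ _ hℓB hℓM μ _ hμC hμH h hh _ ⟨L, _, hL⟩
  exact midpoint_cancellation_general hh hL hα0 hℓB (holderOnWith_iff_norm_sub_le.2 hℓM)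
    (fun x hx ↦ abs_le.2 ⟨by linarith [hμC x hx], (hμC x hx).2⟩)
    (holderOnWith_iff_norm_sub_le.2 hμH)
end
end

section
/- Let d, L, k be positive integers and let Ḡ^d_{1/L} ⊂ (0,1)^d denote the set of L^d centers of the cells of the regular grid 𝒢_{1/L}. Let P = Σ_{x ∈ Ḡ^d_{1/L}} p_x δ_x and Q = Σ_{x ∈ Ḡ^d_{1/L}} q_x δ_x be probability measures supported on Ḡ^d_{1/L} such that every p_x and every q_x is a nonnegative integer multiple of 1/k. Then k·L²·W₂²(P,Q) is a nonnegative integer; equivalently, there exists m ∈ ℕ with W₂²(P,Q) = m/(k·L²), and moreover the infimum defining W₂²(P,Q) is attained by a coupling all of whose atom masses are integer multiples of 1/k. -/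
open MeasureTheory
open scoped ENNReal RealInnerProductSpace

noncomputable section

/-- The center of the grid cell of `𝒢_{1/L}` indexed by `a : Fin d → Fin L`,
namely the point with coordinates `(2 aᵢ + 1)/(2L)`. -/
def gridCenter (d L : ℕ) (a : Fin d → Fin L) : Euc d :=
  (EuclideanSpace.equiv (Fin d) ℝ).symm fun i => (2 * (a i : ℝ) + 1) / (2 * L)

/-!
A probability measure whose atoms have masses in `ℕ / k` is the uniform measure on a family of `k`
points, repetitions allowed. Splitting each atom of a coupling evenly among the pairs of indices
that represent it turns couplings of two such families into doubly stochastic matrices, on which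
the transport cost is linear. By Birkhoff's theorem the minimum is therefore attained at a
permutation, and a permutation coupling of grid centers has cost `1 / k` times a sum of `k`
squared distances, each in `ℕ / L ^ 2`.
-/

section Assignment

variable {n : Type*} [Fintype n] [DecidableEq n]

lemma sum_sum_permMatrix_mul (σ : Equiv.Perm n) (c : n → n → ℝ) :
    ∑ i, ∑ j, σ.permMatrix ℝ i j * c i j = ∑ i, c i (σ i) := by
  simp [PEquiv.toMatrix_apply, Equiv.toPEquiv_apply]

lemma exists_perm_sum_le_of_mem_doublyStochastic {M : Matrix n n ℝ}
    (hM : M ∈ doublyStochastic ℝ n) (c : n → n → ℝ) :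
    ∃ σ : Equiv.Perm n, ∑ i, c i (σ i) ≤ ∑ i, ∑ j, M i j * c i j := by
  let cost : Matrix n n ℝ →ₗ[ℝ] ℝ :=
    { toFun := fun M => ∑ i, ∑ j, M i j * c i j
      map_add' := fun M N => by simp only [Matrix.add_apply, add_mul, Finset.sum_add_distrib]
      map_smul' := fun r M => by
        simp only [Matrix.smul_apply, smul_eq_mul, mul_assoc, Finset.mul_sum, RingHom.id_apply] }
  rw [← SetLike.mem_coe, doublyStochastic_eq_convexHull_permMatrix] at hM
  obtain ⟨_, ⟨σ, rfl⟩, hσ⟩ :=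
    (cost.concaveOn convex_univ).exists_le_of_mem_convexHull (Set.subset_univ _) hM
  exact ⟨σ, (sum_sum_permMatrix_mul σ c).symm.trans_le hσ⟩

end Assignment

section EmpiricalMeasure

variable {ι E F : Type*} [Fintype ι] [MeasurableSpace E] [MeasurableSpace F]

/-- The uniform probability measure on a finite family of points, counted with multiplicity.
It is `0` if the family is empty. -/
def empiricalMeasure (X : ι → E) : Measure E :=
  (Fintype.card ι : ℝ≥0∞)⁻¹ • ∑ i, Measure.dirac (X i)

instance [Nonempty ι] (X : ι → E) : IsProbabilityMeasure (empiricalMeasure X) where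
  measure_univ := by
    simpa [empiricalMeasure] using
      ENNReal.inv_mul_cancel (by simp) (ENNReal.natCast_ne_top (Fintype.card ι))

lemma map_empiricalMeasure (X : ι → E) {f : E → F} (hf : Measurable f) :
    (empiricalMeasure X).map f = empiricalMeasure (f ∘ X) := by
  rw [empiricalMeasure, Measure.map_smul, Measure.map_finset_sum' hf.aemeasurable]
  simp only [empiricalMeasure, Measure.map_dirac' hf, Function.comp_apply]

lemma empiricalMeasure_comp_equiv {κ : Type*} [Fintype κ] (X : ι → E) (e : κ ≃ ι) :
    empiricalMeasure (X ∘ e) = empiricalMeasure X := by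
  simp only [empiricalMeasure, Function.comp_apply, Fintype.card_congr e]
  rw [Equiv.sum_comp e fun i => Measure.dirac (X i)]

lemma empiricalMeasure_sigma_fst {α : Type*} [Fintype α] (p : α → ℕ) (x : α → E) :
    empiricalMeasure (fun s : Σ a, Fin (p a) => x s.1) =
      ∑ a, ((p a : ℝ≥0∞) / (∑ b, p b : ℕ)) • Measure.dirac (x a) := by
  simp only [empiricalMeasure, Fintype.sum_sigma, Finset.sum_const, Finset.card_univ,
    Fintype.card_sigma, Fintype.card_fin, Finset.smul_sum, ← Nat.cast_smul_eq_nsmul ℝ≥0∞,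
    smul_smul, ENNReal.div_eq_inv_mul]

lemma sum_eq_of_isProbabilityMeasure_sum_dirac {α : Type*} [Fintype α] {k : ℕ} (hk : k ≠ 0)
    {p : α → ℕ} {x : α → E}
    (h : IsProbabilityMeasure (∑ a, ((p a : ℝ≥0∞) / k) • Measure.dirac (x a))) :
    ∑ a, p a = k := by
  have hmass : (∑ a, p a : ℝ≥0∞) / k = 1 := by
    simpa [ENNReal.div_eq_inv_mul, Finset.mul_sum] using h.measure_univ
  rw [ENNReal.div_eq_one_iff (by exact_mod_cast hk) (ENNReal.natCast_ne_top k)] at hmass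
  exact_mod_cast hmass

lemma exists_sum_dirac_eq_empiricalMeasure {α : Type*} [Fintype α] {k : ℕ} (hk : k ≠ 0)
    {p : α → ℕ} {x : α → E}
    (h : IsProbabilityMeasure (∑ a, ((p a : ℝ≥0∞) / k) • Measure.dirac (x a))) :
    ∃ f : Fin k → α,
      ∑ a, ((p a : ℝ≥0∞) / k) • Measure.dirac (x a) = empiricalMeasure (x ∘ f) := by
  obtain rfl := sum_eq_of_isProbabilityMeasure_sum_dirac hk h
  let e : Fin (∑ a, p a) ≃ Σ a, Fin (p a) := Fintype.equivOfCardEq (by simp)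
  refine ⟨fun i => (e i).1, ?_⟩
  rw [← empiricalMeasure_sigma_fst, ← empiricalMeasure_comp_equiv _ e]
  rfl

variable [MeasurableSingletonClass E]

lemma empiricalMeasure_singleton (X : ι → E) (x : E) :
    empiricalMeasure X {x} = ((X ⁻¹' {x}).ncard : ℝ≥0∞) / Fintype.card ι := by
  classical
  rw [ENNReal.div_eq_inv_mul, Set.ncard_eq_toFinset_card']
  simp [empiricalMeasure, Set.indicator_apply, Set.preimage]

lemma integral_empiricalMeasure (X : ι → E) (f : E → ℝ) :
    ∫ x, f x ∂empiricalMeasure X = (Fintype.card ι : ℝ)⁻¹ * ∑ i, f (X i) := by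
  rw [empiricalMeasure, integral_smul_measure,
    integral_finsetSum_measure fun i _ => integrable_dirac (by simp)]
  simp

lemma ae_mem_range_empiricalMeasure (X : ι → E) :
    ∀ᵐ x ∂empiricalMeasure X, x ∈ Set.range X := by
  refine Measure.ae_smul_measure ?_ _
  simp [ae_finsetSum_measure_iff, ae_dirac_eq]

lemma ae_mem_range_of_map_eq_empiricalMeasure {μ : Measure F} {f : F → E} (hf : Measurable f)
    {X : ι → E} (h : μ.map f = empiricalMeasure X) : ∀ᵐ z ∂μ, f z ∈ Set.range X :=
  ae_of_ae_map hf.aemeasurable (h ▸ ae_mem_range_empiricalMeasure X)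

end EmpiricalMeasure

section FiberWeight

variable {ι E : Type*}

/-- The function supported at `X i`, with value the inverse of the number of indices representing
this point. The functions `fiberWeight X i` form a partition of unity on the range of `X`; they
split each atom of a measure evenly among its indices. -/
def fiberWeight (X : ι → E) (i : ι) : E → ℝ :=
  Set.indicator {X i} fun x => ((X ⁻¹' {x}).ncard : ℝ)⁻¹

lemma fiberWeight_nonneg (X : ι → E) (i : ι) (x : E) : 0 ≤ fiberWeight X i x :=
  Set.indicator_nonneg (fun _ _ => by positivity) x

lemma fiberWeight_le_one (X : ι → E) (i : ι) (x : E) : fiberWeight X i x ≤ 1 :=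
  Set.indicator_le' (fun _ _ => Nat.cast_inv_le_one _) (fun _ _ => zero_le_one) x

lemma fiberWeight_apply_comm (X : ι → E) (i j : ι) :
    fiberWeight X i (X j) = fiberWeight X j (X i) := by
  by_cases h : X i = X j
  · simp only [fiberWeight, h]
  · simp [fiberWeight, h, Ne.symm h]

lemma sum_fiberWeight_mul [Fintype ι] (X : ι → E) (f : E → ℝ) {x : E} (hx : x ∈ Set.range X) :
    ∑ i, fiberWeight X i x * f (X i) = f x := by
  classical
  have hcard : ((X ⁻¹' {x}).ncard : ℝ) ≠ 0 := by
    exact_mod_cast Set.ncard_ne_zero_of_mem (Set.mem_preimage.mpr hx.choose_spec)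
  have hterm (i : ι) : fiberWeight X i x * f (X i) =
      if X i = x then ((X ⁻¹' {x}).ncard : ℝ)⁻¹ * f x else 0 := by
    by_cases h : X i = x
    · simp [fiberWeight, h]
    · simp [fiberWeight, h, Ne.symm h]
  have hfilter : Finset.card {i | X i = x} = (X ⁻¹' {x}).ncard := by
    simp [Set.ncard_eq_toFinset_card', Set.preimage]
  simp only [hterm, ← Finset.sum_filter, Finset.sum_const, nsmul_eq_mul, hfilter,
    mul_inv_cancel_left₀ hcard]

lemma sum_fiberWeight [Fintype ι] (X : ι → E) {x : E} (hx : x ∈ Set.range X) :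
    ∑ i, fiberWeight X i x = 1 := by
  simpa using sum_fiberWeight_mul X (fun _ => 1) hx

lemma sum_sum_fiberWeight_mul {κ F : Type*} [Fintype ι] [Fintype κ] (X : ι → E) (Y : κ → F)
    (c : E × F → ℝ) {z : E × F} (hz₁ : z.1 ∈ Set.range X) (hz₂ : z.2 ∈ Set.range Y) :
    ∑ i, ∑ j, fiberWeight X i z.1 * fiberWeight Y j z.2 * c (X i, Y j) = c z := by
  calc ∑ i, ∑ j, fiberWeight X i z.1 * fiberWeight Y j z.2 * c (X i, Y j)
      = ∑ i, fiberWeight X i z.1 * c (X i, z.2) := by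
        refine Finset.sum_congr rfl fun i _ => ?_
        simp only [mul_assoc, ← Finset.mul_sum]
        rw [sum_fiberWeight_mul Y (fun y => c (X i, y)) hz₂]
    _ = c z := sum_fiberWeight_mul X (fun x => c (x, z.2)) hz₁

variable [MeasurableSpace E] [MeasurableSingletonClass E]

lemma measurable_fiberWeight (X : ι → E) (i : ι) : Measurable (fiberWeight X i) := by
  have hconst : fiberWeight X i =
      Set.indicator {X i} fun _ => ((X ⁻¹' {X i}).ncard : ℝ)⁻¹ :=
    Set.indicator_congr fun x hx => by rw [Set.mem_singleton_iff.mp hx]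
  exact hconst ▸ measurable_const.indicator (measurableSet_singleton _)

lemma integrable_fiberWeight_mul_fiberWeight {κ F : Type*} [MeasurableSpace F]
    [MeasurableSingletonClass F] {γ : Measure (E × F)} [IsFiniteMeasure γ]
    (X : ι → E) (Y : κ → F) (i : ι) (j : κ) :
    Integrable (fun z => fiberWeight X i z.1 * fiberWeight Y j z.2) γ := by
  refine .of_bound (((measurable_fiberWeight X i).comp measurable_fst).mul
    ((measurable_fiberWeight Y j).comp measurable_snd)).aestronglyMeasurable 1 (.of_forall ?_)
  intro z
  rw [Real.norm_of_nonneg (mul_nonneg (fiberWeight_nonneg X i _) (fiberWeight_nonneg Y j _))]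
  exact mul_le_one₀ (fiberWeight_le_one X i _) (fiberWeight_nonneg Y j _) (fiberWeight_le_one Y j _)

lemma card_mul_integral_fiberWeight [Fintype ι] (X : ι → E) (i : ι) :
    Fintype.card ι * ∫ x, fiberWeight X i x ∂empiricalMeasure X = 1 := by
  have hcard : (Fintype.card ι : ℝ) ≠ 0 := by
    exact_mod_cast (Fintype.card_pos_iff.mpr ⟨i⟩).ne'
  rw [integral_empiricalMeasure, mul_inv_cancel_left₀ hcard]
  simp only [fiberWeight_apply_comm X i, sum_fiberWeight X (Set.mem_range_self i)]

end FiberWeight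

section CouplingMatrix

variable {ι E F : Type*} [Fintype ι] [MeasurableSpace E] [MeasurableSpace F]

/-- The matrix of a coupling `γ` of `empiricalMeasure X` and `empiricalMeasure Y`: the mass of each
atom of `γ` is split evenly among the pairs of indices representing it, and rescaled by the number
of indices so that the rows and columns sum to `1`. -/
def couplingMatrix (X : ι → E) (Y : ι → F) (γ : Measure (E × F)) : Matrix ι ι ℝ :=
  fun i j => Fintype.card ι * ∫ z, fiberWeight X i z.1 * fiberWeight Y j z.2 ∂γ

lemma couplingMatrix_nonneg (X : ι → E) (Y : ι → F) (γ : Measure (E × F)) (i j : ι) :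
    0 ≤ couplingMatrix X Y γ i j :=
  mul_nonneg (Nat.cast_nonneg _) (integral_nonneg fun _ =>
    mul_nonneg (fiberWeight_nonneg X i _) (fiberWeight_nonneg Y j _))

lemma couplingMatrix_map_swap (X : ι → E) (Y : ι → F) (γ : Measure (E × F)) :
    couplingMatrix Y X (γ.map Prod.swap) = (couplingMatrix X Y γ).transpose := by
  ext j i
  simp only [couplingMatrix, Matrix.transpose_apply]
  rw [show (Prod.swap : E × F → F × E) = MeasurableEquiv.prodComm from rfl, integral_map_equiv]
  exact congrArg _ (integral_congr_ae (.of_forall fun _ => mul_comm _ _))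

variable [MeasurableSingletonClass E] [MeasurableSingletonClass F]
  {X : ι → E} {Y : ι → F} {γ : Measure (E × F)} [IsFiniteMeasure γ]

lemma sum_couplingMatrix_row (hX : γ.fst = empiricalMeasure X) (hY : γ.snd = empiricalMeasure Y)
    (i : ι) : ∑ j, couplingMatrix X Y γ i j = 1 := by
  calc ∑ j, couplingMatrix X Y γ i j
      = Fintype.card ι * ∫ z, ∑ j, fiberWeight X i z.1 * fiberWeight Y j z.2 ∂γ := by
        rw [integral_finsetSum _ fun j _ => integrable_fiberWeight_mul_fiberWeight X Y i j,
          Finset.mul_sum]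
        rfl
    _ = Fintype.card ι * ∫ z, fiberWeight X i z.1 ∂γ := by
        congr 1
        refine integral_congr_ae ?_
        filter_upwards [ae_mem_range_of_map_eq_empiricalMeasure measurable_snd hY] with z hz
        rw [← Finset.mul_sum, sum_fiberWeight Y hz, mul_one]
    _ = Fintype.card ι * ∫ x, fiberWeight X i x ∂empiricalMeasure X := by
        rw [← hX, Measure.fst, integral_map measurable_fst.aemeasurable
          (measurable_fiberWeight X i).aestronglyMeasurable]
    _ = 1 := card_mul_integral_fiberWeight X i

lemma couplingMatrix_mem_doublyStochastic [DecidableEq ι] (hX : γ.fst = empiricalMeasure X)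
    (hY : γ.snd = empiricalMeasure Y) : couplingMatrix X Y γ ∈ doublyStochastic ℝ ι := by
  refine mem_doublyStochastic_iff_sum.mpr
    ⟨couplingMatrix_nonneg X Y γ, sum_couplingMatrix_row hX hY, fun j => ?_⟩
  have hswap : ∑ i, couplingMatrix Y X (γ.map Prod.swap) j i = 1 :=
    sum_couplingMatrix_row (Measure.fst_map_swap.trans hY) (Measure.snd_map_swap.trans hX) j
  simpa only [couplingMatrix_map_swap, Matrix.transpose_apply] using hswap

lemma sum_couplingMatrix_mul (hX : γ.fst = empiricalMeasure X) (hY : γ.snd = empiricalMeasure Y)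
    (c : E × F → ℝ) :
    ∑ i, ∑ j, couplingMatrix X Y γ i j * c (X i, Y j) = Fintype.card ι * ∫ z, c z ∂γ := by
  have hintegrable (i j : ι) :
      Integrable (fun z => fiberWeight X i z.1 * fiberWeight Y j z.2 * c (X i, Y j)) γ :=
    (integrable_fiberWeight_mul_fiberWeight X Y i j).mul_const _
  have hsplit : ∀ᵐ z ∂γ,
      ∑ i, ∑ j, fiberWeight X i z.1 * fiberWeight Y j z.2 * c (X i, Y j) = c z := by
    filter_upwards [ae_mem_range_of_map_eq_empiricalMeasure measurable_fst hX,
      ae_mem_range_of_map_eq_empiricalMeasure measurable_snd hY] with z hz₁ hz₂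
    exact sum_sum_fiberWeight_mul X Y c hz₁ hz₂
  rw [← integral_congr_ae hsplit,
    integral_finsetSum _ fun i _ => integrable_finsetSum _ fun j _ => hintegrable i j,
    Finset.mul_sum]
  refine Finset.sum_congr rfl fun i _ => ?_
  rw [integral_finsetSum _ fun j _ => hintegrable i j, Finset.mul_sum]
  refine Finset.sum_congr rfl fun j _ => ?_
  rw [integral_mul_const, ← mul_assoc]
  rfl

lemma exists_perm_forall_integral_le [Nonempty ι] (X : ι → E) (Y : ι → F) (c : E × F → ℝ) :
    ∃ σ : Equiv.Perm ι, ∀ γ : Measure (E × F), IsFiniteMeasure γ →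
      γ.fst = empiricalMeasure X → γ.snd = empiricalMeasure Y →
      ∫ z, c z ∂empiricalMeasure (fun i => (X i, Y (σ i))) ≤ ∫ z, c z ∂γ := by
  classical
  obtain ⟨σ, hσ⟩ := Finite.exists_min fun σ : Equiv.Perm ι => ∑ i, c (X i, Y (σ i))
  refine ⟨σ, fun γ _ hX hY => ?_⟩
  obtain ⟨τ, hτ⟩ := exists_perm_sum_le_of_mem_doublyStochastic
    (couplingMatrix_mem_doublyStochastic hX hY) fun i j => c (X i, Y j)
  rw [integral_empiricalMeasure, inv_mul_le_iff₀ (by exact_mod_cast Fintype.card_pos)]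
  calc ∑ i, c (X i, Y (σ i)) ≤ ∑ i, c (X i, Y (τ i)) := hσ τ
    _ ≤ ∑ i, ∑ j, couplingMatrix X Y γ i j * c (X i, Y j) := hτ
    _ = Fintype.card ι * ∫ z, c z ∂γ := sum_couplingMatrix_mul hX hY c

end CouplingMatrix

section Wasserstein

variable {d : ℕ} {ι : Type*} [Fintype ι] [Nonempty ι]

lemma empiricalMeasure_prodMk_perm_mem_Couplings (X Y : ι → Euc d) (σ : Equiv.Perm ι) :
    empiricalMeasure (fun i => (X i, Y (σ i))) ∈
      Couplings (empiricalMeasure X) (empiricalMeasure Y) := by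
  refine ⟨inferInstance, map_empiricalMeasure _ measurable_fst, ?_⟩
  rw [← empiricalMeasure_comp_equiv Y σ]
  exact map_empiricalMeasure _ measurable_snd

lemma exists_perm_integral_eq_W2sq (X Y : ι → Euc d) :
    ∃ σ : Equiv.Perm ι, ∫ z, ‖z.1 - z.2‖ ^ 2 ∂empiricalMeasure (fun i => (X i, Y (σ i))) =
      W2sq (empiricalMeasure X) (empiricalMeasure Y) := by
  obtain ⟨σ, hσ⟩ := exists_perm_forall_integral_le X Y fun z => ‖z.1 - z.2‖ ^ 2
  refine ⟨σ, Eq.symm (IsLeast.csInf_eq ⟨?mem, ?le⟩)⟩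
  case mem => exact ⟨_, empiricalMeasure_prodMk_perm_mem_Couplings X Y σ, rfl⟩
  case le =>
    rintro _ ⟨γ, ⟨_, hX, hY⟩, rfl⟩
    exact hσ γ inferInstance hX hY

end Wasserstein

section Grid

variable {d L : ℕ}

lemma gridCenter_sub_apply (a b : Fin d → Fin L) (i : Fin d) :
    (gridCenter d L a - gridCenter d L b) i = (((a i : ℤ) - b i : ℤ) : ℝ) / L := by
  have hL : (L : ℝ) ≠ 0 := by exact_mod_cast (a i).pos.ne'
  simp only [gridCenter, PiLp.sub_apply, PiLp.continuousLinearEquiv_symm_apply]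
  push_cast
  field_simp
  ring

lemma exists_norm_gridCenter_sub_sq_eq (a b : Fin d → Fin L) :
    ∃ m : ℕ, ‖gridCenter d L a - gridCenter d L b‖ ^ 2 = (m : ℝ) / (L : ℝ) ^ 2 := by
  refine ⟨∑ i, ((a i : ℤ) - b i).natAbs ^ 2, ?_⟩
  simp only [EuclideanSpace.norm_sq_eq, gridCenter_sub_apply, Real.norm_eq_abs, sq_abs, div_pow,
    ← Finset.sum_div, Nat.cast_sum, Nat.cast_pow, Nat.cast_natAbs, Int.cast_abs]

lemma exists_integral_empiricalMeasure_gridCenter_eq {ι : Type*} [Fintype ι]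
    (f g : ι → Fin d → Fin L) :
    ∃ m : ℕ, ∫ z, ‖z.1 - z.2‖ ^ 2
        ∂empiricalMeasure (fun i => (gridCenter d L (f i), gridCenter d L (g i))) =
      (m : ℝ) / (Fintype.card ι * (L : ℝ) ^ 2) := by
  choose m hm using exists_norm_gridCenter_sub_sq_eq (d := d) (L := L)
  refine ⟨∑ i, m (f i) (g i), ?_⟩
  simp only [integral_empiricalMeasure, hm, ← Finset.sum_div, Nat.cast_sum]
  rw [← div_eq_inv_mul, div_div, mul_comm]

end Grid

/-- If `P` and `Q` are probability measures supported on the `L^d`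
grid-cell centers of `(0,1)^d` whose atom masses are nonnegative integer multiples of
`1/k`, then `k L² W₂²(P,Q)` is a nonnegative integer, i.e. `W₂²(P,Q) = m/(k L²)` for
some `m ∈ ℕ`; moreover the infimum defining `W₂²(P,Q)` is attained by a coupling all
of whose atom masses are integer multiples of `1/k`. -/
theorem grid_W2sq_rational (d L k : ℕ) (hd : 0 < d) (hL : 0 < L) (hk : 0 < k)
    (p q : (Fin d → Fin L) → ℕ)
    (P Q : Measure (Euc d))
    (hP : P = ∑ a : Fin d → Fin L, ((p a : ℝ≥0∞) / k) • Measure.dirac (gridCenter d L a))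
    (hQ : Q = ∑ a : Fin d → Fin L, ((q a : ℝ≥0∞) / k) • Measure.dirac (gridCenter d L a))
    (hPprob : IsProbabilityMeasure P) (hQprob : IsProbabilityMeasure Q) :
    (∃ m : ℕ, W2sq P Q = (m : ℝ) / ((k : ℝ) * (L : ℝ) ^ 2)) ∧
    ∃ γ ∈ Couplings P Q,
      (∫ z, ‖z.1 - z.2‖ ^ 2 ∂γ) = W2sq P Q ∧
      ∀ z : Euc d × Euc d, ∃ m : ℕ, γ {z} = (m : ℝ≥0∞) / k := by
  obtain ⟨f, hf⟩ := exists_sum_dirac_eq_empiricalMeasure hk.ne' (hP ▸ hPprob)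
  obtain ⟨g, hg⟩ := exists_sum_dirac_eq_empiricalMeasure hk.ne' (hQ ▸ hQprob)
  obtain rfl := hP.trans hf
  obtain rfl := hQ.trans hg
  have : Nonempty (Fin k) := ⟨⟨0, hk⟩⟩
  obtain ⟨σ, hσ⟩ := exists_perm_integral_eq_W2sq (gridCenter d L ∘ f) (gridCenter d L ∘ g)
  obtain ⟨m, hm⟩ := exists_integral_empiricalMeasure_gridCenter_eq f (g ∘ σ)
  rw [Fintype.card_fin] at hm
  refine ⟨⟨m, hσ.symm.trans hm⟩, _, empiricalMeasure_prodMk_perm_mem_Couplings _ _ σ, hσ, ?_⟩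
  intro z
  rw [empiricalMeasure_singleton, Fintype.card_fin]
  exact ⟨_, rfl⟩
end
end
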